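/- arXiv:0811.0226 — 5 statements merged into one kernel-verified Lean document; each statement's English description precedes it below -/
import Mathlib

section
/- Let G be a seminormed abelian group, let K be an additive subgroup of G, and let π : G → G/K be the canonical quotient homomorphism. Assume that the set {x ∈ G : ‖x‖ ≤ 2} is finite. Then the cardinality of the image π({x ∈ G : ‖x‖ ≤ 1}) multiplied by the cardinality of {k ∈ K : ‖k‖ ≤ 1} is at most the cardinality of {x ∈ G : ‖x‖ ≤ 2}. -/
open scoped Pointwise

/- Choosing one representative in `s` of each value in `f '' s` gives a set `u` on which `f` is
injective, and translation by `ker f` does not change `f`; so the sums `x + k` with `x ∈ u` and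
`k ∈ t ∩ ker f` are pairwise distinct. -/
theorem encard_image_mul_encard_inter_ker_le {G H : Type*} [AddGroup G] [AddZeroClass H]
    (f : G →+ H) (s t : Set G) :
    (f '' s).encard * (t ∩ f.ker).encard ≤ (s + t).encard := by
  obtain ⟨u, hus, hu⟩ := s.exists_subset_bijOn f
  have map_add_ker (x : G) {k : G} (hk : k ∈ f.ker) : f (x + k) = f x := by
    rw [map_add, f.mem_ker.mp hk, add_zero]
  have add_injOn : Set.InjOn (fun p : G × G ↦ p.1 + p.2) (u ×ˢ (t ∩ f.ker)) := by
    rintro ⟨x, k⟩ ⟨hx, -, hk⟩ ⟨y, l⟩ ⟨hy, -, hl⟩ (h : x + k = y + l)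
    obtain rfl : x = y := hu.injOn hx hy <| by
      rw [← map_add_ker x hk, h, map_add_ker y hl]
    rw [add_left_cancel h]
  calc (f '' s).encard * (t ∩ f.ker).encard
      = (u ×ˢ (t ∩ f.ker)).encard := by
        rw [Set.encard_prod, ← hu.image_eq, hu.injOn.encard_image]
    _ ≤ (s + t).encard :=
        Set.encard_le_encard_of_injOn
          (fun _ hp ↦ Set.add_mem_add (hus hp.1) hp.2.1) add_injOn

theorem stmt_0_general {G : Type*} [SeminormedAddGroup G] (K : AddSubgroup G) [K.Normal]
    (r s : ℝ) :
    (QuotientAddGroup.mk' K '' {x : G | ‖x‖ ≤ r}).encard * {k : K | ‖(k : G)‖ ≤ s}.encard ≤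
      {x : G | ‖x‖ ≤ r + s}.encard := by
  have ball_inter_ker : {x : G | ‖x‖ ≤ s} ∩ (QuotientAddGroup.mk' K).ker =
      K.subtype '' {k : K | ‖(k : G)‖ ≤ s} := by
    rw [QuotientAddGroup.ker_mk', Set.inter_comm]
    exact (Subtype.image_preimage_coe (K : Set G) {x | ‖x‖ ≤ s}).symm
  have ball_add_ball : {x : G | ‖x‖ ≤ r} + {x : G | ‖x‖ ≤ s} ⊆ {x : G | ‖x‖ ≤ r + s} :=
    Set.add_subset_iff.mpr fun _ hx _ hy ↦ norm_add_le_of_le hx hy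
  rw [← K.subtype_injective.encard_image, ← ball_inter_ker]
  exact (encard_image_mul_encard_inter_ker_le _ _ _).trans (Set.encard_le_encard ball_add_ball)

/-- Upper bound of Proposition 2.6 (group-theoretic content): in a seminormed
abelian group `G` with subgroup `K`, if the ball of radius 2 is finite, then
`#(π(ball 1)) * #(ball 1 ∩ K) ≤ #(ball 2)`, where `π : G → G/K`. -/
theorem stmt_0 {G : Type*} [SeminormedAddCommGroup G] (K : AddSubgroup G)
    (hfin : {x : G | ‖x‖ ≤ 2}.Finite) :
    Nat.card ((QuotientAddGroup.mk' K) '' {x : G | ‖x‖ ≤ 1}) *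
      Nat.card {k : K | ‖(k : G)‖ ≤ 1} ≤ Nat.card {x : G | ‖x‖ ≤ 2} := by
  have h := stmt_0_general K 1 1
  rw [one_add_one_eq_two] at h
  simpa only [Nat.card_coe_set_eq, Set.ncard_def, ENat.toNat_mul] using
    ENat.toNat_le_toNat h hfin.encard_lt_top.ne
end

section
/- Let E be a finite-dimensional real normed vector space and let L ⊆ E be a ℤ-lattice, i.e. a discrete additive subgroup of E that spans E over ℝ. Then for every integer n ≥ 1, the cardinality of {x ∈ L : ‖x‖ ≤ 1} is at most n^(dim_ℝ E) times the cardinality of {x ∈ L : ‖x‖ ≤ 2/n}. -/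
/-!
Let `H` have finite index. In each coset of `H` that meets `A`, choose a point `a` of `A`:
translation by `-a` embeds the part of `A` in that coset into `(-A + A) ∩ H`, so `A` has at most
`H.index` times as many points as `(-A + A) ∩ H`. If `A` is the ball of radius `r` in a discrete
subgroup `L`, and `H = nL`, which has index `n ^ rank L`, then the points of `(-A + A) ∩ H` are of
the form `n • z` with `‖z‖ ≤ 2r / n`.
-/

open Module
open scoped Finset Pointwise

theorem ncard_le_index_mul_ncard_neg_add_inter {G : Type*} [AddGroup G] (H : AddSubgroup G)
    [H.FiniteIndex] {A : Set G} (hA : A.Finite) :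
    A.ncard ≤ H.index * ((-A + A) ∩ H).ncard := by
  classical
  lift A to Finset G using hA
  have := H.fintypeQuotientOfFiniteIndex
  have card_fiber_le (q : G ⧸ H) :
      #{x ∈ A | QuotientAddGroup.mk x = q} ≤ ((-A + A : Set G) ∩ H).ncard := by
    obtain hempty | ⟨a, ha⟩ := (A.filter (QuotientAddGroup.mk · = q)).eq_empty_or_nonempty
    · simp [hempty]
    obtain ⟨haA, rfl⟩ := Finset.mem_filter.1 ha
    rw [← Set.ncard_coe_finset]
    refine Set.ncard_le_ncard_of_injOn (-a + ·) (fun x hx ↦ ?_) (add_right_injective _).injOn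
      ((A.finite_toSet.neg.add A.finite_toSet).inter_of_left _)
    obtain ⟨hxA, hxa⟩ := Finset.mem_filter.1 hx
    exact ⟨Set.add_mem_add (Set.neg_mem_neg.2 haA) hxA, QuotientAddGroup.eq.1 hxa.symm⟩
  simpa [AddSubgroup.index, mul_comm] using
    Finset.card_le_mul_card_image_of_maps_to (fun _ _ ↦ Finset.mem_univ _) _
      fun q _ ↦ card_fiber_le q

theorem ncard_le_pow_finrank_mul_ncard_preimage_nsmul_sub {M : Type*} [AddCommGroup M]
    [Module.Free ℤ M] [Module.Finite ℤ M] {n : ℕ} (hn : n ≠ 0) {A : Set M} (hA : A.Finite) :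
    A.ncard ≤ n ^ finrank ℤ M * ((n • · : M → M) ⁻¹' (A - A)).ncard := by
  let nM : AddSubgroup M := (nsmulAddMonoidHom n).range
  have index_nM : nM.index = n ^ finrank ℤ M := AddSubgroup.index_range_nsmul M n
  have : nM.FiniteIndex := ⟨by rw [index_nM]; positivity⟩
  have nsmul_injective : Function.Injective (n • · : M → M) :=
    AddSubgroup.nsmulAddMonoidHom_injective_of_isTorsionFree hn
  have ncard_inter : ((-A + A) ∩ nM).ncard = ((n • · : M → M) ⁻¹' (A - A)).ncard := by
    rw [neg_add_eq_sub, ← Set.ncard_image_of_injective (_ ⁻¹' _) nsmul_injective,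
      Set.image_preimage_eq_inter_range]
    rfl
  simpa only [index_nM, ncard_inter] using ncard_le_index_mul_ncard_neg_add_inter nM hA

theorem norm_le_two_mul_div_of_nsmul_eq_sub {E : Type*} [SeminormedAddCommGroup E]
    [NormedSpace ℝ E] {n : ℕ} (hn : n ≠ 0) {r : ℝ} {x y z : E} (hx : ‖x‖ ≤ r) (hy : ‖y‖ ≤ r)
    (hz : n • z = x - y) : ‖z‖ ≤ 2 * r / n := by
  rw [le_div_iff₀' (by positivity)]
  calc n * ‖z‖ = ‖x - y‖ := by
        rw [← hz, ← Nat.cast_smul_eq_nsmul ℝ, norm_smul, Real.norm_natCast]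
    _ ≤ ‖x‖ + ‖y‖ := norm_sub_le x y
    _ ≤ 2 * r := by linarith

section DiscreteSubgroup

variable {E : Type*} [NormedAddCommGroup E] (L : AddSubgroup E) [DiscreteTopology L]

theorem finite_setOf_norm_le_of_discrete [ProperSpace E] (r : ℝ) :
    {x : L | ‖(x : E)‖ ≤ r}.Finite := by
  have : ProperSpace L := .of_isClosed L.isClosed_of_discrete
  simpa [Metric.closedBall] using (isCompact_closedBall (0 : L) r).finite_of_discrete

theorem finrank_int_eq_finrank_real_of_discrete [NormedSpace ℝ E] [FiniteDimensional ℝ E] :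
    finrank ℤ L = Set.finrank ℝ (L : Set E) := by
  have span_eq : Submodule.span ℤ (L : Set E) = L.toIntSubmodule :=
    Submodule.span_eq L.toIntSubmodule
  have : DiscreteTopology (Submodule.span ℤ (L : Set E)) := by
    rw [span_eq]; assumption
  rw [Real.finrank_eq_int_finrank_of_discrete this, Set.finrank, span_eq]
  rfl

end DiscreteSubgroup

theorem stmt_2_general {E : Type*} [NormedAddCommGroup E] [NormedSpace ℝ E]
    [FiniteDimensional ℝ E] (L : AddSubgroup E) [DiscreteTopology L] {n : ℕ} (hn : n ≠ 0)
    (r : ℝ) :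
    Nat.card {x : L | ‖(x : E)‖ ≤ r} ≤
      n ^ Set.finrank ℝ (L : Set E) * Nat.card {x : L | ‖(x : E)‖ ≤ 2 * r / n} := by
  have : ProperSpace E := FiniteDimensional.proper ℝ E
  have : DiscreteTopology L.toIntSubmodule := ‹DiscreteTopology L›
  have : Module.Free ℤ L := inferInstanceAs (Module.Free ℤ L.toIntSubmodule)
  have : Module.Finite ℤ L := inferInstanceAs (Module.Finite ℤ L.toIntSubmodule)
  let ball (ρ : ℝ) : Set L := {x | ‖(x : E)‖ ≤ ρ}
  have preimage_subset : (n • · : L → L) ⁻¹' (ball r - ball r) ⊆ ball (2 * r / n) := by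
    rintro z ⟨x, hx, y, hy, hxy⟩
    exact norm_le_two_mul_div_of_nsmul_eq_sub hn hx hy (congrArg Subtype.val hxy).symm
  calc (ball r).ncard
      ≤ n ^ finrank ℤ L * ((n • · : L → L) ⁻¹' (ball r - ball r)).ncard :=
        ncard_le_pow_finrank_mul_ncard_preimage_nsmul_sub hn (finite_setOf_norm_le_of_discrete L r)
    _ ≤ n ^ finrank ℤ L * (ball (2 * r / n)).ncard := by
        gcongr
        exact finite_setOf_norm_le_of_discrete L _
    _ = n ^ Set.finrank ℝ (L : Set E) * (ball (2 * r / n)).ncard := by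
        rw [finrank_int_eq_finrank_real_of_discrete]

/-- Lattice-point counting step in the proof of Lemma 2.7: for a ℤ-lattice `L`
(a discrete additive subgroup spanning `E` over ℝ) in a finite-dimensional real
normed vector space `E` and any integer `n ≥ 1`,
`#{x ∈ L : ‖x‖ ≤ 1} ≤ n^(dim E) * #{x ∈ L : ‖x‖ ≤ 2/n}`. -/
theorem stmt_2 {E : Type*} [NormedAddCommGroup E] [NormedSpace ℝ E]
    [FiniteDimensional ℝ E] (L : AddSubgroup E) (hdisc : DiscreteTopology L)
    (hspan : Submodule.span ℝ (L : Set E) = ⊤) (n : ℕ) (hn : 1 ≤ n) :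
    Nat.card {x : L | ‖(x : E)‖ ≤ 1} ≤
      n ^ (Module.finrank ℝ E) * Nat.card {x : L | ‖(x : E)‖ ≤ 2 / (n : ℝ)} := by
  rw [← finrank_top, ← hspan]
  simpa [Set.finrank] using stmt_2_general L (Nat.one_le_iff_ne_zero.1 hn) 1
end

section
/- Let E be a finite-dimensional real normed vector space and let L ⊆ E be a ℤ-lattice, i.e. a discrete additive subgroup of E that spans E over ℝ. Then for every real number α ≥ 0, one has 0 ≤ log #{x ∈ L : ‖x‖ ≤ 1} − log #{x ∈ L : ‖x‖ ≤ e^(−α)} ≤ (α + log 3) · dim_ℝ E, where log denotes the natural logarithm. -/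
/-!
Let `N ρ` be the number of points of `L` of norm at most `ρ`. Choose a maximal `r`-separated set `C`
of points of `L` of norm at most `R`. By maximality the balls of radius `r` around `C` cover all
such points, and translation by a point of `L` shows that each of these balls contains exactly `N r`
points of `L`, so `N R ≤ #C * N r`. The balls of radius `r / 2` around `C` are disjoint and lie in
the ball of radius `R + r / 2`, so comparing volumes in the span of `L`, of dimension `d`, gives
`#C ≤ (1 + 2 * R / r) ^ d`, which is at most `(3 * R / r) ^ d` for `r ≤ R`.
-/

open Metric MeasureTheory Module Set
open scoped NNReal Pointwise

section Packing

variable {E : Type*} [NormedAddCommGroup E] [NormedSpace ℝ E] [FiniteDimensional ℝ E]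

theorem card_mul_pow_le_of_pairwiseDisjoint_closedBall {s : Finset E} {x : E} {δ ρ : ℝ}
    (hδ : 0 ≤ δ) (hρ : 0 ≤ ρ) (hdisj : (s : Set E).PairwiseDisjoint (closedBall · δ))
    (hsub : ∀ y ∈ s, closedBall y δ ⊆ closedBall x ρ) :
    s.card * δ ^ finrank ℝ E ≤ ρ ^ finrank ℝ E := by
  borelize E
  let μ : Measure E := Measure.addHaar
  have unit_ball_pos : 0 < μ.real (ball 0 1) :=
    ENNReal.toReal_pos (measure_ball_pos μ 0 one_pos).ne' measure_ball_lt_top.ne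
  refine le_of_mul_le_mul_right ?_ unit_ball_pos
  calc s.card * δ ^ finrank ℝ E * μ.real (ball 0 1)
      = ∑ y ∈ s, μ.real (closedBall y δ) := by
        simp only [μ.addHaar_real_closedBall _ hδ, Finset.sum_const, nsmul_eq_mul, mul_assoc]
    _ = μ.real (⋃ y ∈ s, closedBall y δ) :=
        (measureReal_biUnion_finset hdisj (fun _ _ ↦ measurableSet_closedBall)
          fun _ _ ↦ measure_closedBall_lt_top.ne).symm
    _ ≤ μ.real (closedBall x ρ) :=
        measureReal_mono (iUnion₂_subset hsub) measure_closedBall_lt_top.ne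
    _ = ρ ^ finrank ℝ E * μ.real (ball 0 1) := μ.addHaar_real_closedBall x hρ

theorem card_le_of_isSeparated_of_subset_closedBall {s : Finset E} {x : E} {r : ℝ≥0} {R : ℝ}
    (hr : 0 < r) (hR : 0 ≤ R) (hsep : IsSeparated r (s : Set E))
    (hsub : (s : Set E) ⊆ closedBall x R) :
    (s.card : ℝ) ≤ (1 + 2 * R / r) ^ finrank ℝ E := by
  have disjoint_balls : (s : Set E).PairwiseDisjoint (closedBall · (r / 2 : ℝ)) := by
    intro y hy z hz hyz
    refine closedBall_disjoint_closedBall ?_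
    have : (r : ENNReal) < edist y z := hsep hy hz hyz
    rw [edist_nndist, ENNReal.coe_lt_coe] at this
    rwa [add_halves, ← coe_nndist, NNReal.coe_lt_coe]
  have balls_subset : ∀ y ∈ s, closedBall y (r / 2 : ℝ) ⊆ closedBall x (R + r / 2) := by
    intro y hy
    have : dist y x ≤ R := hsub hy
    exact closedBall_subset_closedBall' (by linarith)
  have volume_le := card_mul_pow_le_of_pairwiseDisjoint_closedBall (by positivity) (by positivity)
    disjoint_balls balls_subset
  calc (s.card : ℝ) ≤ (R + r / 2) ^ finrank ℝ E / (r / 2) ^ finrank ℝ E :=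
        (le_div_iff₀ (by positivity)).2 volume_le
    _ = (1 + 2 * R / r) ^ finrank ℝ E := by
        rw [← div_pow]
        congr 1
        field_simp
        ring

end Packing

section Counting

variable {G : Type*} [SeminormedAddCommGroup G] (L : AddSubgroup G)

theorem inter_closedBall_eq_vadd {y : G} (hy : y ∈ L) (r : ℝ) :
    (L : Set G) ∩ closedBall y r = y +ᵥ ((L : Set G) ∩ closedBall 0 r) := by
  rw [vadd_set_inter, vadd_coe_set hy, vadd_closedBall, vadd_eq_add, add_zero]

theorem ncard_le_card_mul_of_isCover {S : Set G} {C : Finset G} {r : ℝ≥0} (hS : S ⊆ L)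
    (hC : (C : Set G) ⊆ L) (hcover : IsCover r S C)
    (hfin : ((L : Set G) ∩ closedBall 0 r).Finite) :
    S.ncard ≤ C.card * ((L : Set G) ∩ closedBall 0 r).ncard := by
  have subset_union : S ⊆ ⋃ y ∈ C, (L : Set G) ∩ closedBall y r := by
    simp_rw [← inter_iUnion]
    exact subset_inter hS (isCover_iff_subset_iUnion_closedBall.1 hcover)
  have union_finite : (⋃ y ∈ C, (L : Set G) ∩ closedBall y r).Finite :=
    C.finite_toSet.biUnion fun _ hy ↦ by
      rw [inter_closedBall_eq_vadd L (hC hy)]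
      exact hfin.vadd_set
  calc S.ncard ≤ (⋃ y ∈ C, (L : Set G) ∩ closedBall y r).ncard :=
        ncard_le_ncard subset_union union_finite
    _ ≤ ∑ y ∈ C, ((L : Set G) ∩ closedBall y r).ncard := C.set_ncard_biUnion_le _
    _ = ∑ _ ∈ C, ((L : Set G) ∩ closedBall 0 r).ncard :=
        Finset.sum_congr rfl fun _ hy ↦ by
          rw [inter_closedBall_eq_vadd L (hC hy), ncard_vadd_set]
    _ = C.card * ((L : Set G) ∩ closedBall 0 r).ncard := by
        rw [Finset.sum_const, smul_eq_mul]

theorem natCard_norm_le_eq_ncard_inter_closedBall (r : ℝ) :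
    Nat.card {x : L | ‖(x : G)‖ ≤ r} = ((L : Set G) ∩ closedBall 0 r).ncard := by
  rw [← Subtype.image_preimage_coe, ncard_image_of_injective _ Subtype.val_injective,
    ← Nat.card_coe_set_eq]
  simp [preimage]

theorem ncard_addSubgroupOf_inter_closedBall {L V : AddSubgroup G} (hLV : L ≤ V) (r : ℝ) :
    ((L.addSubgroupOf V : Set V) ∩ closedBall 0 r).ncard =
      ((L : Set G) ∩ closedBall 0 r).ncard := by
  rw [← ncard_preimage_of_injective_subset_range (f := ((↑) : V → G)) Subtype.val_injective
    (by simpa using inter_subset_left.trans hLV)]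
  congr 1

end Counting

section DiscreteSubgroup

variable {G : Type*} [NormedAddCommGroup G] [ProperSpace G] (L : AddSubgroup G)
  [DiscreteTopology L]

theorem finite_inter_closedBall (r : ℝ) : ((L : Set G) ∩ closedBall 0 r).Finite := by
  rw [inter_comm]
  exact finite_isBounded_inter_isClosed DiscreteTopology.isDiscrete isBounded_closedBall
    AddSubgroup.isClosed_of_discrete

theorem ncard_inter_closedBall_pos {r : ℝ} (hr : 0 ≤ r) :
    0 < ((L : Set G) ∩ closedBall 0 r).ncard :=
  (ncard_pos (finite_inter_closedBall L r)).2 ⟨0, L.zero_mem, mem_closedBall_self hr⟩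

theorem ncard_inter_closedBall_mono {r R : ℝ} (h : r ≤ R) :
    ((L : Set G) ∩ closedBall 0 r).ncard ≤ ((L : Set G) ∩ closedBall 0 R).ncard :=
  ncard_le_ncard (inter_subset_inter_right _ (closedBall_subset_closedBall h))
    (finite_inter_closedBall L R)

end DiscreteSubgroup

section Lattice

variable {E : Type*} [NormedAddCommGroup E] [NormedSpace ℝ E] [FiniteDimensional ℝ E]
  (L : AddSubgroup E) [DiscreteTopology L]

theorem ncard_inter_closedBall_le_pow_mul {r R : ℝ} (hr : 0 < r) (hR : 0 ≤ R) :
    (((L : Set E) ∩ closedBall 0 R).ncard : ℝ) ≤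
      (1 + 2 * R / r) ^ finrank ℝ E * ((L : Set E) ∩ closedBall 0 r).ncard := by
  lift r to ℝ≥0 using hr.le
  let S := (L : Set E) ∩ closedBall 0 R
  have packing_ne_top : packingNumber r S ≠ ⊤ :=
    ((packingNumber_le_encard_self S).trans_lt (finite_inter_closedBall L R).encard_lt_top).ne
  have C_subset : maximalSeparatedSet r S ⊆ S := maximalSeparatedSet_subset
  obtain ⟨C, hC⟩ := ((finite_inter_closedBall L R).subset C_subset).exists_finset_coe
  rw [← hC] at C_subset
  have C_separated : IsSeparated r (C : Set E) := hC ▸ isSeparated_maximalSeparatedSet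
  have C_cover : IsCover r S C := hC ▸ isCover_maximalSeparatedSet packing_ne_top
  calc (S.ncard : ℝ) ≤ C.card * ((L : Set E) ∩ closedBall 0 r).ncard :=
        mod_cast ncard_le_card_mul_of_isCover L inter_subset_left
          (C_subset.trans inter_subset_left) C_cover (finite_inter_closedBall L r)
    _ ≤ (1 + 2 * R / r) ^ finrank ℝ E * ((L : Set E) ∩ closedBall 0 r).ncard := by
        gcongr
        exact card_le_of_isSeparated_of_subset_closedBall hr hR C_separated
          (C_subset.trans inter_subset_right)

theorem log_ncard_inter_closedBall_sub_le {r R : ℝ} (hr : 0 < r) (hrR : r ≤ R) :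
    Real.log ((L : Set E) ∩ closedBall 0 R).ncard - Real.log ((L : Set E) ∩ closedBall 0 r).ncard ≤
      (Real.log (R / r) + Real.log 3) * finrank ℝ E := by
  have hR : 0 < R := hr.trans_le hrR
  have ncard_r_pos : (0 : ℝ) < ((L : Set E) ∩ closedBall 0 r).ncard :=
    mod_cast ncard_inter_closedBall_pos L hr.le
  have ncard_R_pos : (0 : ℝ) < ((L : Set E) ∩ closedBall 0 R).ncard :=
    mod_cast ncard_inter_closedBall_pos L hR.le
  have base_le : 1 + 2 * R / r ≤ R / r * 3 := by
    have : 1 ≤ R / r := (one_le_div hr).2 hrR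
    rw [mul_div_assoc]
    linarith
  rw [← Real.log_div ncard_R_pos.ne' ncard_r_pos.ne',
    ← Real.log_mul (by positivity) three_ne_zero, mul_comm, ← Real.log_pow]
  refine Real.log_le_log (by positivity) ((div_le_iff₀ ncard_r_pos).2 ?_)
  exact (ncard_inter_closedBall_le_pow_mul L hr hR.le).trans (by gcongr)

end Lattice

theorem stmt_3_general {E : Type*} [NormedAddCommGroup E] [NormedSpace ℝ E]
    (L : AddSubgroup E) [DiscreteTopology L]
    [FiniteDimensional ℝ (Submodule.span ℝ (L : Set E))] {α : ℝ} (hα : 0 ≤ α) :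
    0 ≤ Real.log (Nat.card {x : L | ‖(x : E)‖ ≤ 1}) -
        Real.log (Nat.card {x : L | ‖(x : E)‖ ≤ Real.exp (-α)}) ∧
    Real.log (Nat.card {x : L | ‖(x : E)‖ ≤ 1}) -
        Real.log (Nat.card {x : L | ‖(x : E)‖ ≤ Real.exp (-α)}) ≤
      (α + Real.log 3) * finrank ℝ (Submodule.span ℝ (L : Set E)) := by
  let V := Submodule.span ℝ (L : Set E)
  let M : AddSubgroup V := L.addSubgroupOf V.toAddSubgroup
  have : DiscreteTopology M :=
    DiscreteTopology.preimage_of_continuous_injective (L : Set E) continuous_subtype_val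
      Subtype.val_injective
  have exp_le_one : Real.exp (-α) ≤ 1 := Real.exp_le_one_iff.2 (neg_nonpos.2 hα)
  have card_eq (r : ℝ) :
      Nat.card {x : L | ‖(x : E)‖ ≤ r} = ((M : Set V) ∩ closedBall 0 r).ncard :=
    (natCard_norm_le_eq_ncard_inter_closedBall L r).trans
      (ncard_addSubgroupOf_inter_closedBall Submodule.subset_span r).symm
  simp only [card_eq]
  constructor
  · refine sub_nonneg.2 (Real.log_le_log ?_ ?_)
    · exact mod_cast ncard_inter_closedBall_pos M (Real.exp_pos _).le
    · exact mod_cast ncard_inter_closedBall_mono M exp_le_one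
  · have log_ratio : Real.log (1 / Real.exp (-α)) = α := by
      rw [one_div, Real.log_inv, Real.log_exp, neg_neg]
    have h := log_ncard_inter_closedBall_sub_le M (Real.exp_pos _) exp_le_one
    rwa [log_ratio] at h

/-- Lemma 2.7 of the paper in lattice form: for a ℤ-lattice `L` (a discrete
additive subgroup spanning `E` over ℝ) in a finite-dimensional real normed
vector space `E` and any real `α ≥ 0`,
`0 ≤ log #{x ∈ L : ‖x‖ ≤ 1} − log #{x ∈ L : ‖x‖ ≤ e^(−α)} ≤ (α + log 3)·dim E`. -/
theorem stmt_3 {E : Type*} [NormedAddCommGroup E] [NormedSpace ℝ E]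
    [FiniteDimensional ℝ E] (L : AddSubgroup E) (hdisc : DiscreteTopology L)
    (hspan : Submodule.span ℝ (L : Set E) = ⊤) (α : ℝ) (hα : 0 ≤ α) :
    0 ≤ Real.log (Nat.card {x : L | ‖(x : E)‖ ≤ 1}) -
        Real.log (Nat.card {x : L | ‖(x : E)‖ ≤ Real.exp (-α)}) ∧
    Real.log (Nat.card {x : L | ‖(x : E)‖ ≤ 1}) -
        Real.log (Nat.card {x : L | ‖(x : E)‖ ≤ Real.exp (-α)}) ≤
      (α + Real.log 3) * (Module.finrank ℝ E) := by
  have h := stmt_3_general L hα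
  rwa [hspan, finrank_top] at h
end

section
/- Let V be a real vector space, let d ≥ 1 be an integer, and let B be a symmetric d-multilinear form on V with values in ℝ. Let x, y ∈ V satisfy B(x^d) ≥ 0 and B(y^d) ≥ 0, and suppose that for every real number t > 0 one has B((x + t y)^d) ≥ ((B(x^d))^(1/d) + t (B(y^d))^(1/d))^d. Then B(x^(d−1) y) ≥ (B(x^d))^((d−1)/d) · (B(y^d))^(1/d). -/
/-!
Both sides of the hypothesis agree at `t = 0`, so it passes to the right derivatives there. With `a`
and `b` the `d`-th roots of `B(x^d)` and `B(y^d)`, the derivative on the left is `d a ^ (d - 1) b`.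
On the right it is the sum over all slots of `B` with `y` in that slot and `x` in the others, and by
symmetry these `d` terms coincide.
-/

open Filter Finset Function Set Topology

theorem hasDerivWithinAt_Ioi_le_of_frequently_le {f g : ℝ → ℝ} {f' g' a : ℝ}
    (hf : HasDerivWithinAt f f' (Ioi a) a) (hg : HasDerivWithinAt g g' (Ioi a) a)
    (ha : g a ≤ f a) (hfg : ∃ᶠ t in 𝓝[>] a, f t ≤ g t) : f' ≤ g' := by
  rw [hasDerivWithinAt_iff_tendsto_slope' self_notMem_Ioi] at hf hg
  refine le_of_tendsto_of_tendsto_of_frequently hf hg ?_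
  refine (hfg.and_eventually self_mem_nhdsWithin).mono fun t ⟨hle, hat⟩ ↦ ?_
  rw [slope_def_field, slope_def_field]
  exact div_le_div_of_nonneg_right (sub_le_sub hle ha) (sub_pos.2 hat).le

theorem hasDerivAt_add_mul_pow_zero {𝕜 : Type*} [NontriviallyNormedField 𝕜] (a b : 𝕜) (n : ℕ) :
    HasDerivAt (fun t ↦ (a + t * b) ^ n) (n * (a ^ (n - 1) * b)) 0 := by
  simpa [mul_assoc] using (((hasDerivAt_id (0 : 𝕜)).mul_const b).const_add a).fun_pow n

section LineDeriv

variable {ι : Type*} [Fintype ι] [DecidableEq ι]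

theorem multilinearMap_map_add_smul {R N : Type*} {M : ι → Type*} [CommRing R]
    [∀ i, AddCommGroup (M i)] [∀ i, Module R (M i)] [AddCommGroup N] [Module R N]
    (f : MultilinearMap R M N) (x v : ∀ i, M i) (t : R) :
    f (x + t • v) =
      f x + t • f.linearDeriv x v + ∑ s with 2 ≤ #s, t ^ #s • f (s.piecewise v x) := by
  have hpiecewise (s : Finset ι) : f (s.piecewise (t • v) x) = t ^ #s • f (s.piecewise v x) := by
    rw [← prod_const, ← f.map_piecewise_smul]
    congr 1
    ext i
    by_cases hi : i ∈ s <;> simp [hi]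
  simp only [f.map_add_eq_map_add_linearDeriv_add, map_smul, hpiecewise]

theorem hasLineDerivAt_multilinearMap {𝕜 F : Type*} {E : ι → Type*} [NontriviallyNormedField 𝕜]
    [∀ i, AddCommGroup (E i)] [∀ i, Module 𝕜 (E i)] [NormedAddCommGroup F] [NormedSpace 𝕜 F]
    (f : MultilinearMap 𝕜 E F) (x v : ∀ i, E i) :
    HasLineDerivAt 𝕜 f (f.linearDeriv x v) x v := by
  have hlinear : HasDerivAt (fun t : 𝕜 ↦ f x + t • f.linearDeriv x v) (f.linearDeriv x v) 0 := by
    simpa using ((hasDerivAt_id (0 : 𝕜)).smul_const (f.linearDeriv x v)).const_add (f x)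
  have hhigher : HasDerivAt
      (fun t : 𝕜 ↦ ∑ s with 2 ≤ #s, t ^ #s • f (s.piecewise v x)) 0 0 := by
    rw [← sum_const_zero (s := {s : Finset ι | 2 ≤ #s})]
    refine HasDerivAt.fun_sum fun s hs ↦ ?_
    have hcard : #s - 1 ≠ 0 := by
      have : 2 ≤ #s := by simpa using hs
      lia
    simpa [hcard] using (hasDerivAt_pow #s (0 : 𝕜)).smul_const (f (s.piecewise v x))
  simpa only [HasLineDerivAt, multilinearMap_map_add_smul, add_zero] using hlinear.fun_add hhigher

theorem card_mul_pow_mul_le_linearDeriv {E : ι → Type*} [∀ i, AddCommGroup (E i)]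
    [∀ i, Module ℝ (E i)] (B : MultilinearMap ℝ E ℝ) {x y : ∀ i, E i} {a b : ℝ}
    (ha : a ^ Fintype.card ι = B x)
    (hineq : ∃ᶠ t in 𝓝[>] (0 : ℝ), (a + t * b) ^ Fintype.card ι ≤ B (x + t • y)) :
    Fintype.card ι * (a ^ (Fintype.card ι - 1) * b) ≤ B.linearDeriv x y :=
  hasDerivWithinAt_Ioi_le_of_frequently_le
    (hasDerivAt_add_mul_pow_zero a b (Fintype.card ι)).hasDerivWithinAt
    (HasDerivAt.hasDerivWithinAt (hasLineDerivAt_multilinearMap B x y)) (by simp [ha]) hineq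

end LineDeriv

section Symmetric

variable {ι : Type*} [DecidableEq ι]

theorem apply_update_const_eq_of_perm_invariant {α β : Type*} {f : (ι → α) → β}
    (hf : ∀ (v : ι → α) (σ : Equiv.Perm ι), f (v ∘ σ) = f v) (x y : α) (i j : ι) :
    f (update (fun _ ↦ x) i y) = f (update (fun _ ↦ x) j y) := by
  rw [← hf _ (Equiv.swap i j), update_comp_equiv, Equiv.symm_swap, Equiv.swap_apply_left]
  rfl

theorem linearDeriv_const_of_perm_invariant [Fintype ι] {R M N : Type*} [Semiring R]
    [AddCommMonoid M] [Module R M] [AddCommMonoid N] [Module R N]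
    {f : MultilinearMap R (fun _ : ι ↦ M) N}
    (hf : ∀ (v : ι → M) (σ : Equiv.Perm ι), f (v ∘ σ) = f v) (x y : M) (j : ι) :
    f.linearDeriv (fun _ ↦ x) (fun _ ↦ y) = Fintype.card ι • f (update (fun _ ↦ x) j y) := by
  simp only [MultilinearMap.linearDeriv_apply,
    apply_update_const_eq_of_perm_invariant hf x y _ j, sum_const, card_univ]

end Symmetric

theorem ite_lt_sub_one_eq_update {α : Type*} {d : ℕ} (hd : d - 1 < d) (x y : α) :
    (fun i : Fin d ↦ if (i : ℕ) < d - 1 then x else y) = update (fun _ ↦ x) ⟨d - 1, hd⟩ y := by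
  ext i
  have hi : (i : ℕ) < d - 1 ↔ i ≠ ⟨d - 1, hd⟩ := by
    rw [Ne, Fin.ext_iff]
    lia
  simp [update_apply, hi]

theorem rpow_one_div_natCast_pow {r : ℝ} (hr : 0 ≤ r) (n m : ℕ) :
    (r ^ ((1 : ℝ) / n)) ^ m = r ^ ((m : ℝ) / n) := by
  rw [← Real.rpow_mul_natCast hr, one_div_mul_eq_div]

theorem stmt_4_general {ι V : Type*} [Fintype ι] [DecidableEq ι] [AddCommGroup V] [Module ℝ V]
    {d : ℕ} (hd : Fintype.card ι = d) {B : MultilinearMap ℝ (fun _ : ι ↦ V) ℝ}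
    (hsym : ∀ (v : ι → V) (σ : Equiv.Perm ι), B (v ∘ σ) = B v) {x y : V} {a b : ℝ}
    (ha : a ^ d = B fun _ ↦ x)
    (hineq : ∃ᶠ t in 𝓝[>] (0 : ℝ), (a + t * b) ^ d ≤ B fun _ ↦ x + t • y) (j : ι) :
    a ^ (d - 1) * b ≤ B (update (fun _ ↦ x) j y) := by
  subst hd
  have hderiv := card_mul_pow_mul_le_linearDeriv B (y := fun _ ↦ y) ha hineq
  rw [linearDeriv_const_of_perm_invariant hsym x y j, nsmul_eq_mul] at hderiv
  exact le_of_mul_le_mul_left hderiv (Nat.cast_pos.2 (Fintype.card_pos_iff.2 ⟨j⟩))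

/-- First inequality of Corollary 3.1 (multilinear-algebra content): if `B` is a
symmetric `d`-multilinear form with `B(x^d) ≥ 0`, `B(y^d) ≥ 0`, and
`B((x+ty)^d) ≥ (B(x^d)^(1/d) + t·B(y^d)^(1/d))^d` for all `t > 0`, then
`B(x^(d-1)y) ≥ B(x^d)^((d-1)/d) · B(y^d)^(1/d)`. -/
theorem stmt_4 {V : Type*} [AddCommGroup V] [Module ℝ V] (d : ℕ) (hd : 1 ≤ d)
    (B : MultilinearMap ℝ (fun _ : Fin d => V) ℝ)
    (hsym : ∀ (v : Fin d → V) (σ : Equiv.Perm (Fin d)), B (v ∘ σ) = B v)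
    (x y : V)
    (hx : 0 ≤ B (fun _ => x)) (hy : 0 ≤ B (fun _ => y))
    (hineq : ∀ t : ℝ, 0 < t →
      ((B (fun _ => x)) ^ ((1 : ℝ) / d) + t * (B (fun _ => y)) ^ ((1 : ℝ) / d)) ^ d ≤
        B (fun _ => x + t • y)) :
    (B (fun _ => x)) ^ (((d : ℝ) - 1) / d) * (B (fun _ => y)) ^ ((1 : ℝ) / d) ≤
      B (fun i => if (i : ℕ) < d - 1 then x else y) := by
  have hroot : (B (fun _ => x) ^ ((1 : ℝ) / d)) ^ d = B fun _ => x := by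
    rw [rpow_one_div_natCast_pow hx, div_self (by positivity), Real.rpow_one]
  rw [ite_lt_sub_one_eq_update (by lia), ← Nat.cast_pred hd, ← rpow_one_div_natCast_pow hx]
  exact stmt_4_general (Fintype.card_fin d) hsym hroot
    (Eventually.frequently (f := 𝓝[>] 0) (eventually_nhdsWithin_of_forall hineq)) _
end

section
/- Let V be a real vector space, let d ≥ 2 be an integer, and let B be a symmetric d-multilinear form on V with values in ℝ. Let x, y ∈ V satisfy B(x^d) > 0, and suppose there exists ε > 0 such that for every real number t with 0 < t < ε one has (B(x^d) + t · B(x^(d−1) y))^d ≥ (B(x^d))^(d−1) · B((x + t y)^d). Then (B(x^(d−1) y))^2 ≥ B(x^d) · B(x^(d−2) y^2). -/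
/-!
Write `b k = B(x^(d-k) y^k)`. Symmetry of `B` gives the binomial expansion
`B((x + t y)^d) = ∑ k, (d choose k) t^k b k`, so the hypothesis says that the polynomial
`∑ k, (d choose k) (b 0 ^ (d-k) b 1 ^ k - b 0 ^ (d-1) b k) t^k` takes nonnegative values at
arbitrarily small `t > 0`. Its coefficients of degree `0` and `1` vanish, hence its coefficient of
degree `2`, which is `(d choose 2) b 0 ^ (d-2) (b 1 ^ 2 - b 0 b 2)`, is nonnegative.
-/

open Filter Finset Polynomial Topology

section MixedValue

variable {α β : Type*} {d : ℕ}

/-- The mixed value `f(x^(d-k) y^k)` of a function of `d` variables, with `x` in the first `d - k`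
slots and `y` in the last `k`. For `k > d` the subtraction truncates and the value is `f(y^d)`. -/
def mixedValue (f : (Fin d → α) → β) (x y : α) (k : ℕ) : β :=
  f fun i => if (i : ℕ) < d - k then x else y

theorem mixedValue_zero (f : (Fin d → α) → β) (x y : α) :
    mixedValue f x y 0 = f fun _ => x := by
  simp [mixedValue]

theorem apply_piecewise_eq_of_card_eq {ι : Type*} [Finite ι] [DecidableEq ι] {f : (ι → α) → β}
    (hf : ∀ (v : ι → α) (σ : Equiv.Perm ι), f (v ∘ σ) = f v) (x y : α) {s t : Finset ι}
    (h : #s = #t) :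
    f (s.piecewise (fun _ => y) fun _ => x) = f (t.piecewise (fun _ => y) fun _ => x) := by
  obtain ⟨σ, rfl⟩ := Equiv.Perm.exists_map_finset_eq s t h
  rw [← hf ((s.map σ.toEmbedding).piecewise _ _) σ]
  congr 1 with i
  simp [Finset.piecewise]

theorem apply_piecewise_eq_mixedValue {f : (Fin d → α) → β}
    (hf : ∀ (v : Fin d → α) (σ : Equiv.Perm (Fin d)), f (v ∘ σ) = f v) (x y : α)
    (s : Finset (Fin d)) :
    f (s.piecewise (fun _ => y) fun _ => x) = mixedValue f x y #s := by
  let firstSlots : Finset (Fin d) := {i | (i : ℕ) < d - #s}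
  have card_compl_firstSlots : #s = #firstSlotsᶜ := by
    have : #s ≤ d := by simpa using s.card_le_univ
    rw [card_compl, Fin.card_filter_val_lt, Fintype.card_fin]
    omega
  rw [apply_piecewise_eq_of_card_eq hf x y card_compl_firstSlots, piecewise_compl]
  congr 1 with i
  simp [firstSlots, Finset.piecewise]

end MixedValue

section Expansion

variable {R V M : Type*} [CommSemiring R] [AddCommMonoid V] [Module R V] [AddCommMonoid M]
  [Module R M]

theorem multilinearMap_apply_add_smul {ι : Type*} [Fintype ι] [DecidableEq ι]
    (B : MultilinearMap R (fun _ : ι => V) M) (x y : V) (t : R) :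
    (B fun _ => x + t • y) =
      ∑ s : Finset ι, t ^ #s • B (s.piecewise (fun _ => y) fun _ => x) := by
  have pull_out_scalars (s : Finset ι) : B (s.piecewise (fun _ => t • y) fun _ => x) =
      t ^ #s • B (s.piecewise (fun _ => y) fun _ => x) := by
    rw [← prod_const, ← B.map_piecewise_smul]
    congr 1 with i
    by_cases hi : i ∈ s <;> simp [hi]
  simp only [← pull_out_scalars, ← B.map_add_univ]
  congr 1
  exact funext fun _ => add_comm x (t • y)

theorem symmetric_multilinearMap_apply_add_smul {d : ℕ}
    (B : MultilinearMap R (fun _ : Fin d => V) M)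
    (hB : ∀ (v : Fin d → V) (σ : Equiv.Perm (Fin d)), B (v ∘ σ) = B v) (x y : V) (t : R) :
    (B fun _ => x + t • y) = ∑ k ∈ range (d + 1), d.choose k • t ^ k • mixedValue B x y k := by
  simp only [multilinearMap_apply_add_smul, apply_piecewise_eq_mixedValue hB]
  simpa using sum_powerset_apply_card (fun k => t ^ k • mixedValue B x y k)
    (x := (univ : Finset (Fin d)))

end Expansion

section OrderedRing

variable {R : Type*} [CommRing R] [LinearOrder R] [IsStrictOrderedRing R] [TopologicalSpace R]
  [IsTopologicalSemiring R] [OrderClosedTopology R]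

theorem coeff_nonneg_of_X_pow_dvd_of_frequently_eval_nonneg {p : R[X]} {n : ℕ} (hp : X ^ n ∣ p)
    (h : ∃ᶠ t in 𝓝[>] (0 : R), 0 ≤ p.eval t) : 0 ≤ p.coeff n := by
  obtain ⟨q, rfl⟩ := hp
  have q_nonneg : ∃ᶠ t in 𝓝[>] (0 : R), 0 ≤ q.eval t := by
    refine (h.and_eventually self_mem_nhdsWithin).mono fun t ⟨ht, ht_pos⟩ => ?_
    rw [eval_mul, eval_X_pow] at ht
    exact nonneg_of_mul_nonneg_right ht (pow_pos ht_pos n)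
  have q_tendsto : Tendsto (fun t => q.eval t) (𝓝[>] 0) (𝓝 (q.eval 0)) :=
    q.continuous.continuousWithinAt
  simpa [coeff_X_pow_mul', coeff_zero_eq_eval_zero] using
    ge_of_tendsto_of_frequently q_tendsto q_nonneg

theorem mul_sq_sub_nonneg_of_frequently_binomial_le {d : ℕ} (hd : 2 ≤ d) (b : ℕ → R)
    (h : ∃ᶠ t in 𝓝[>] (0 : R),
      b 0 ^ (d - 1) * ∑ k ∈ range (d + 1), d.choose k • t ^ k • b k ≤ (b 0 + t * b 1) ^ d) :
    0 ≤ b 0 ^ (d - 2) * (b 1 ^ 2 - b 0 * b 2) := by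
  let c (k : ℕ) : R := b 0 ^ (d - k) * b 1 ^ k - b 0 ^ (d - 1) * b k
  let p : R[X] := ∑ k ∈ range (d + 1), monomial k (d.choose k * c k)
  have pow_pred_mul : b 0 ^ (d - 1) * b 0 = b 0 ^ d := pow_sub_one_mul (by omega) _
  have coeff_p {k : ℕ} (hk : k ≤ d) : p.coeff k = d.choose k * c k := by
    simp [p, coeff_monomial, Nat.lt_succ_of_le hk]
  have eval_p (t : R) : p.eval t = (b 0 + t * b 1) ^ d -
      b 0 ^ (d - 1) * ∑ k ∈ range (d + 1), d.choose k • t ^ k • b k := by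
    rw [add_comm (b 0), add_pow, mul_sum, ← sum_sub_distrib, eval_finsetSum]
    refine sum_congr rfl fun k _ => ?_
    simp only [eval_monomial, c, nsmul_eq_mul, smul_eq_mul]
    ring
  have X_sq_dvd_p : X ^ 2 ∣ p := by
    refine X_pow_dvd_iff.2 fun k hk => ?_
    rw [coeff_p (by omega)]
    interval_cases k <;> simp [c, pow_pred_mul]
  have coeff_two_nonneg : 0 ≤ p.coeff 2 :=
    coeff_nonneg_of_X_pow_dvd_of_frequently_eval_nonneg X_sq_dvd_p <|
      h.mono fun t ht => by rwa [eval_p, sub_nonneg]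
  have c_two : c 2 = b 0 ^ (d - 2) * (b 1 ^ 2 - b 0 * b 2) := by
    have : b 0 ^ (d - 1) = b 0 ^ (d - 2) * b 0 := by rw [← pow_succ]; congr 1; omega
    simp only [c, this]
    ring
  rw [coeff_p hd] at coeff_two_nonneg
  rw [← c_two]
  exact nonneg_of_mul_nonneg_right coeff_two_nonneg (Nat.cast_pos.2 (Nat.choose_pos hd))

theorem stmt_5_general {V : Type*} [AddCommMonoid V] [Module R V] {d : ℕ} (hd : 2 ≤ d)
    (B : MultilinearMap R (fun _ : Fin d => V) R)
    (hB : ∀ (v : Fin d → V) (σ : Equiv.Perm (Fin d)), B (v ∘ σ) = B v) (x y : V)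
    (h : ∃ᶠ t in 𝓝[>] (0 : R),
      (B fun _ => x) ^ (d - 1) * (B fun _ => x + t • y) ≤
        ((B fun _ => x) + t * mixedValue B x y 1) ^ d) :
    0 ≤ (B fun _ => x) ^ (d - 2) *
      (mixedValue B x y 1 ^ 2 - (B fun _ => x) * mixedValue B x y 2) := by
  simp only [symmetric_multilinearMap_apply_add_smul B hB, ← mixedValue_zero B x y] at h ⊢
  exact mul_sq_sub_nonneg_of_frequently_binomial_le hd (mixedValue B x y) h

end OrderedRing

/-- Second inequality of Corollary 3.1 (multilinear-algebra content): if `B` is a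
symmetric `d`-multilinear form with `B(x^d) > 0` and
`(B(x^d) + t·B(x^(d-1)y))^d ≥ B(x^d)^(d-1) · B((x+ty)^d)` for all sufficiently
small `t > 0`, then `(B(x^(d-1)y))^2 ≥ B(x^d) · B(x^(d-2)y^2)`. -/
theorem stmt_5 {V : Type*} [AddCommGroup V] [Module ℝ V] (d : ℕ) (hd : 2 ≤ d)
    (B : MultilinearMap ℝ (fun _ : Fin d => V) ℝ)
    (hsym : ∀ (v : Fin d → V) (σ : Equiv.Perm (Fin d)), B (v ∘ σ) = B v)
    (x y : V)
    (hx : 0 < B (fun _ => x))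
    (hineq : ∃ ε : ℝ, 0 < ε ∧ ∀ t : ℝ, 0 < t → t < ε →
      (B (fun _ => x)) ^ (d - 1) * B (fun _ => x + t • y) ≤
        (B (fun _ => x) + t * B (fun i => if (i : ℕ) < d - 1 then x else y)) ^ d) :
    B (fun _ => x) * B (fun i => if (i : ℕ) < d - 2 then x else y) ≤
      (B (fun i => if (i : ℕ) < d - 1 then x else y)) ^ 2 := by
  obtain ⟨ε, hε, h⟩ := hineq
  have frequently_le := (eventually_of_mem (Ioo_mem_nhdsGT hε) fun t ht => h t ht.1 ht.2).frequently
  exact sub_nonneg.1 <|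
    nonneg_of_mul_nonneg_right (stmt_5_general hd B hsym x y frequently_le) (pow_pos hx _)
end
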